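/- Let n ≥ 3 and let Y_n be a minimizer of the quantization energy among subsets of Q with n points. Then for every y ∈ Y_n, the Voronoi cell V of y satisfies diam(V) ≤ Γ₄·(n−2)^{−1/3}, where Γ₄ := (2·12^{1/4}·16^{1/3}/(π^{1/4}·ω₃^{1/12}))·(√(1 + 2⁴·3³/(5²·10³)) − 1)^{−1/2}·(5²·10³/(2²·3³))^{1/4}. -/

import Mathlib

open MeasureTheory

noncomputable section

/-- Euclidean 3-space. -/
abbrev E3 := EuclideanSpace ℝ (Fin 3)

/-- The closed unit cube Q = [0,1]³. -/
def Qcube : Set E3 := {x | ∀ i, x i ∈ Set.Icc (0 : ℝ) 1}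

/-- The quantization energy E(Y) = ∫_Q dist(x,Y)² dx. -/
def quantE (Y : Finset E3) : ℝ := ∫ x in Qcube, (Metric.infDist x (↑Y : Set E3)) ^ 2

/-- The Voronoi cell of a generator y ∈ Y, relative to Q. -/
def vorCell (Y : Finset E3) (y : E3) : Set E3 :=
  {x ∈ Qcube | ∀ z ∈ Y, dist x y ≤ dist x z}

/-- Y is a minimizer of the quantization energy among n-point subsets of Q. -/
def IsMinimizer (n : ℕ) (Y : Finset E3) : Prop :=
  (↑Y : Set E3) ⊆ Qcube ∧ Y.card = n ∧
    ∀ Z : Finset E3, (↑Z : Set E3) ⊆ Qcube → Z.card = n → quantE Y ≤ quantE Z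

/-- ω₃ = 4π/3, the volume of the unit ball in ℝ³. -/
def omega3 : ℝ := 4 * Real.pi / 3

/-- Γ₁ = (2/5)^{2/3} / 40. -/
def Gamma1 : ℝ := ((2 / 5 : ℝ) ^ ((2 : ℝ) / 3)) / 40

/-- Γ₃ = ω₃^{-1/5} Γ₁^{1/5}. -/
def Gamma3 : ℝ := omega3 ^ (-(1 : ℝ) / 5) * Gamma1 ^ ((1 : ℝ) / 5)

/-- Γ₅ = (1/4)(√(1 + 2⁴·3³/(5²·10³)) − 1) Γ₃. -/
def Gamma5 : ℝ :=
  (1 / 4) * (Real.sqrt (1 + (2 ^ 4 * 3 ^ 3 : ℝ) / (5 ^ 2 * 10 ^ 3)) - 1) * Gamma3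

/-- Γ₄, the diameter upper-bound constant. -/
def Gamma4 : ℝ :=
  (2 * (12 : ℝ) ^ ((1 : ℝ) / 4) * (16 : ℝ) ^ ((1 : ℝ) / 3) /
      (Real.pi ^ ((1 : ℝ) / 4) * omega3 ^ ((1 : ℝ) / 12))) *
    (Real.sqrt (1 + (2 ^ 4 * 3 ^ 3 : ℝ) / (5 ^ 2 * 10 ^ 3)) - 1) ^ (-(1 : ℝ) / 2) *
    ((5 ^ 2 * 10 ^ 3 : ℝ) / (2 ^ 2 * 3 ^ 3)) ^ ((1 : ℝ) / 4)

/-- Axis-parallel box. -/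
def boxS (a b : Fin 3 → ℝ) : Set E3 := {x | ∀ i, x i ∈ Set.Icc (a i) (b i)}

lemma boxS_eq (a b : Fin 3 → ℝ) :
    boxS a b = (WithLp.ofLp : E3 → (Fin 3 → ℝ)) ⁻¹' Set.Icc a b := by
  ext x
  simp only [boxS, Set.mem_setOf_eq, Set.mem_preimage, Set.mem_Icc, Pi.le_def]
  exact forall_and

lemma Qcube_eq : Qcube = boxS (fun _ => 0) (fun _ => 1) := rfl

lemma measurable_boxS (a b : Fin 3 → ℝ) : MeasurableSet (boxS a b) := by
  rw [boxS_eq]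
  exact (PiLp.volume_preserving_ofLp (Fin 3)).measurable measurableSet_Icc

lemma volume_boxS (a b : Fin 3 → ℝ) : volume (boxS a b) = ∏ i, ENNReal.ofReal (b i - a i) := by
  rw [boxS_eq, (PiLp.volume_preserving_ofLp (Fin 3)).measure_preimage
    measurableSet_Icc.nullMeasurableSet, Real.volume_Icc_pi]

lemma compact_Qcube : IsCompact Qcube := by
  rw [Qcube_eq, boxS_eq]
  exact (PiLp.homeomorph 2 (fun _ : Fin 3 => ℝ)).isClosedEmbedding.isCompact_preimage isCompact_Icc

lemma measurable_Qcube : MeasurableSet Qcube := measurable_boxS _ _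

lemma volume_Qcube : volume Qcube = 1 := by
  rw [Qcube_eq, volume_boxS]; simp

lemma intQ {f : E3 → ℝ} (hf : Continuous f) : IntegrableOn f Qcube :=
  hf.continuousOn.integrableOn_compact compact_Qcube

lemma cont_sq (Y : Finset E3) : Continuous fun x : E3 => (Metric.infDist x (↑Y : Set E3)) ^ 2 :=
  (Metric.continuous_infDist_pt _).pow 2

lemma intE (Y : Finset E3) :
    IntegrableOn (fun x : E3 => (Metric.infDist x (↑Y : Set E3)) ^ 2) Qcube := intQ (cont_sq Y)

lemma dist_sq_three (x z : E3) :
    dist x z ^ 2 = (x 0 - z 0) ^ 2 + (x 1 - z 1) ^ 2 + (x 2 - z 2) ^ 2 := by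
  rw [EuclideanSpace.dist_eq, Real.sq_sqrt (Finset.sum_nonneg fun _ _ => sq_nonneg _),
    Fin.sum_univ_three]
  simp [Real.dist_eq, sq_abs]

lemma dist_sq_le (x z : E3) (c : ℝ) (h : ∀ i, |x i - z i| ≤ c) : dist x z ^ 2 ≤ 3 * c ^ 2 := by
  rw [dist_sq_three]
  have h2 : ∀ i, (x i - z i) ^ 2 ≤ c ^ 2 := fun i => by
    rw [← sq_abs]; exact pow_le_pow_left₀ (abs_nonneg _) (h i) 2
  linarith [h2 0, h2 1, h2 2]

/-- cell index -/
def cidx (k : ℕ) (hk : 0 < k) (x : E3) : Fin 3 → Fin k :=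
  fun i => ⟨min ⌊(k : ℝ) * x i⌋₊ (k - 1), by omega⟩

/-- grid point -/
def gpt (k : ℕ) (j : Fin 3 → Fin k) : E3 := WithLp.toLp 2 (fun i => ((j i : ℕ) : ℝ) / k)

lemma cidx_bd (k : ℕ) (hk : 0 < k) (x : E3) (hx : x ∈ Qcube) (i : Fin 3) :
    gpt k (cidx k hk x) i ≤ x i ∧ x i ≤ gpt k (cidx k hk x) i + 1 / k := by
  have hk' : (0 : ℝ) < k := by exact_mod_cast hk
  have h0 := (hx i).1
  have h1 := (hx i).2
  have hf := Nat.floor_le (mul_nonneg hk'.le h0)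
  have hl := Nat.lt_floor_add_one ((k : ℝ) * x i)
  simp only [gpt, cidx]
  rw [← add_div, div_le_iff₀ hk', le_div_iff₀ hk']
  constructor
  · have : ((min ⌊(k : ℝ) * x i⌋₊ (k - 1) : ℕ) : ℝ) ≤ (⌊(k : ℝ) * x i⌋₊ : ℝ) := by
      exact_mod_cast min_le_left _ _
    linarith
  · rcases le_total ⌊(k : ℝ) * x i⌋₊ (k - 1) with h | h
    · rw [min_eq_left h]; linarith
    · rw [min_eq_right h, Nat.cast_sub hk]; push_cast; nlinarith

lemma gpt_mem (k : ℕ) (j : Fin 3 → Fin k) : gpt k j ∈ Qcube := by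
  intro i
  have hj := (j i).2
  have hk' : (0 : ℝ) < k := by exact_mod_cast (by omega : 0 < k)
  simp only [gpt, Set.mem_Icc]
  refine ⟨by positivity, ?_⟩
  rw [div_le_one hk']
  exact_mod_cast hj.le

lemma infinite_Qcube : Qcube.Infinite := by
  intro h
  have h1 := h.measure_zero (volume : Measure E3)
  rw [volume_Qcube] at h1
  exact one_ne_zero h1

lemma setInt_const_le {f : E3 → ℝ} (hf : Continuous f) (c : ℝ) (h : ∀ x ∈ Qcube, f x ≤ c) :
    ∫ x in Qcube, f x ≤ c := by
  have h1 : ∫ x in Qcube, f x ≤ ∫ x in Qcube, c :=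
    setIntegral_mono_on (intQ hf) (intQ continuous_const) measurable_Qcube h
  have h2 : ∫ x in Qcube, c = c := by
    rw [setIntegral_const]; simp [Measure.real, volume_Qcube]
  linarith

lemma E_le (n k : ℕ) (hk : 0 < k) (hkn : k ^ 3 ≤ n) (Y : Finset E3) (hY : IsMinimizer n Y) :
    quantE Y ≤ 3 * (1 / (k : ℝ)) ^ 2 := by
  classical
  set G : Finset E3 := Finset.univ.image (gpt k) with hG
  have hGc : G.card ≤ n := by
    refine le_trans Finset.card_image_le ?_
    simpa using hkn
  have hGQ : (↑G : Set E3) ⊆ Qcube := by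
    intro z hz
    simp only [hG, Finset.coe_image, Finset.coe_univ, Set.image_univ, Set.mem_range] at hz
    obtain ⟨j, rfl⟩ := hz
    exact gpt_mem k j
  obtain ⟨Z, hGZ, hZQ, hZc⟩ : ∃ Z : Finset E3, G ⊆ Z ∧ (↑Z : Set E3) ⊆ Qcube ∧ Z.card = n := by
    obtain ⟨W, hW, hWc⟩ := infinite_Qcube.exists_subset_card_eq n
    have : n ≤ (G ∪ W).card := by
      rw [← hWc]; exact Finset.card_le_card Finset.subset_union_right
    obtain ⟨Z, h1, h2, h3⟩ := Finset.exists_subsuperset_card_eq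
      (Finset.subset_union_left (s₁ := G) (s₂ := W)) hGc this
    refine ⟨Z, h1, fun z hz => ?_, h3⟩
    have := h2 hz
    rcases Finset.mem_union.1 this with h | h
    · exact hGQ h
    · exact hW h
  refine (hY.2.2 Z hZQ hZc).trans ?_
  refine setInt_const_le (cont_sq Z) _ fun x hx => ?_
  have hm : gpt k (cidx k hk x) ∈ (↑Z : Set E3) :=
    hGZ (Finset.mem_image_of_mem _ (Finset.mem_univ _))
  refine (pow_le_pow_left₀ Metric.infDist_nonneg (Metric.infDist_le_dist_of_mem hm) 2).trans ?_
  refine dist_sq_le _ _ _ fun i => ?_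
  have := cidx_bd k hk x hx i
  rw [abs_le]
  constructor
  · have : (0 : ℝ) ≤ 1 / k := by positivity
    linarith
  · linarith

lemma exists_S (n k : ℕ) (hk : 0 < k) (hkn : 2 * k ^ 3 ≤ n) (Y : Finset E3)
    (hYQ : (↑Y : Set E3) ⊆ Qcube) (hYc : Y.card = n) :
    ∃ S ⊆ Y, k ^ 3 ≤ S.card ∧
      ∀ y ∈ S, ∃ z ∈ Y, z ≠ y ∧ dist z y ^ 2 ≤ 3 * (1 / (k : ℝ)) ^ 2 := by
  classical
  set A := Y.filter (fun y => ∀ z ∈ Y, z ≠ y → cidx k hk z ≠ cidx k hk y) with hA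
  have hAc : A.card ≤ k ^ 3 := by
    have : A.card ≤ (Finset.univ : Finset (Fin 3 → Fin k)).card := by
      refine Finset.card_le_card_of_injOn (cidx k hk) (fun _ _ => Finset.mem_univ _) ?_
      intro a ha b hb hab
      by_contra hne
      have hb' := (Finset.mem_filter.1 hb).2
      exact hb' a (Finset.mem_filter.1 ha).1 hne hab
    simpa using this
  refine ⟨Y \ A, Finset.sdiff_subset, ?_, ?_⟩
  · have := Finset.le_card_sdiff A Y
    omega
  · intro y hy
    obtain ⟨hyY, hyA⟩ := Finset.mem_sdiff.1 hy
    have : ¬ ∀ z ∈ Y, z ≠ y → cidx k hk z ≠ cidx k hk y := fun h =>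
      hyA (Finset.mem_filter.2 ⟨hyY, h⟩)
    push Not at this
    obtain ⟨z, hz, hzy, hc⟩ := this
    refine ⟨z, hz, hzy, dist_sq_le _ _ _ fun i => ?_⟩
    have h1 := cidx_bd k hk z (hYQ hz) i
    have h2 := cidx_bd k hk y (hYQ hyY) i
    rw [hc] at h1
    rw [abs_le]
    constructor <;> linarith [h1.1, h1.2, h2.1, h2.2]

lemma removal_pt (Y S : Finset E3) (hne : Y.Nonempty) (δ : ℝ) (hδ : 0 ≤ δ)
    (hS : ∀ y ∈ S, ∃ z ∈ Y, z ≠ y ∧ dist z y ≤ δ) (x : E3) :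
    ∑ y ∈ S, ((Metric.infDist x (↑(Y.erase y) : Set E3)) ^ 2 -
      (Metric.infDist x (↑Y : Set E3)) ^ 2) ≤
      (Metric.infDist x (↑Y : Set E3)) ^ 2 + 2 * δ ^ 2 := by
  classical
  set d := Metric.infDist x (↑Y : Set E3) with hd
  obtain ⟨w, hw, hwd⟩ := (Y.finite_toSet.isCompact).exists_infDist_eq_dist
    (by exact_mod_cast hne) x
  have hw' : w ∈ Y := hw
  have hd0 : 0 ≤ d := Metric.infDist_nonneg
  have key : ∀ y ∈ S, y ≠ w → (Metric.infDist x (↑(Y.erase y) : Set E3)) ^ 2 - d ^ 2 ≤ 0 := by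
    intro y _ hyw
    have hm : w ∈ (↑(Y.erase y) : Set E3) := by
      simp only [Finset.mem_coe]; exact Finset.mem_erase.2 ⟨hyw.symm, hw'⟩
    have := Metric.infDist_le_dist_of_mem (x := x) hm
    have h2 : Metric.infDist x (↑(Y.erase y) : Set E3) ≤ d := by rw [hd, hwd]; exact this
    have := pow_le_pow_left₀ Metric.infDist_nonneg h2 2
    linarith
  have hR : 0 ≤ d ^ 2 + 2 * δ ^ 2 := by positivity
  by_cases hwS : w ∈ S
  · rw [← Finset.add_sum_erase S _ hwS]
    have h1 : ∑ y ∈ S.erase w, ((Metric.infDist x (↑(Y.erase y) : Set E3)) ^ 2 - d ^ 2) ≤ 0 :=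
      Finset.sum_nonpos fun y hy =>
        key y (Finset.mem_erase.1 hy).2 (Finset.mem_erase.1 hy).1
    obtain ⟨z, hz, hzw, hzd⟩ := hS w hwS
    have hm : z ∈ (↑(Y.erase w) : Set E3) := by
      simp only [Finset.mem_coe]; exact Finset.mem_erase.2 ⟨hzw, hz⟩
    have h2 : Metric.infDist x (↑(Y.erase w) : Set E3) ≤ d + δ := by
      refine (Metric.infDist_le_dist_of_mem hm).trans ?_
      have := dist_triangle x w z
      rw [dist_comm w z] at this
      linarith
    have h3 := pow_le_pow_left₀ Metric.infDist_nonneg h2 2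
    nlinarith [sq_nonneg (d - δ)]
  · refine le_trans (Finset.sum_nonpos fun y hy => key y hy ?_) hR
    rintro rfl
    exact hwS hy

lemma removal (n k : ℕ) (hk : 0 < k) (hkn : 2 * k ^ 3 ≤ n) (Y : Finset E3)
    (hY : IsMinimizer n Y) :
    ∃ y ∈ Y, (k : ℝ) ^ 3 * (quantE (Y.erase y) - quantE Y) ≤ 9 * (1 / (k : ℝ)) ^ 2 := by
  classical
  have hk3 : 0 < k ^ 3 := by positivity
  obtain ⟨S, hSY, hSc, hS⟩ := exists_S n k hk hkn Y hY.1 hY.2.1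
  have hne : Y.Nonempty := by
    rw [← Finset.card_pos, hY.2.1]; omega
  have hSne : S.Nonempty := by
    rw [← Finset.card_pos]; omega
  set δ := Real.sqrt (3 * (1 / (k : ℝ)) ^ 2) with hδ
  have hδ2 : δ ^ 2 = 3 * (1 / (k : ℝ)) ^ 2 := Real.sq_sqrt (by positivity)
  have hpt := removal_pt Y S hne δ (Real.sqrt_nonneg _) (fun y hy => by
    obtain ⟨z, hz, h1, h2⟩ := hS y hy
    exact ⟨z, hz, h1, Real.le_sqrt_of_sq_le h2⟩)
  have hsum : ∑ y ∈ S, (quantE (Y.erase y) - quantE Y) ≤ quantE Y + 2 * δ ^ 2 := by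
    have e1 : ∑ y ∈ S, (quantE (Y.erase y) - quantE Y) =
        ∫ x in Qcube, ∑ y ∈ S, ((Metric.infDist x (↑(Y.erase y) : Set E3)) ^ 2 -
      (Metric.infDist x (↑Y : Set E3)) ^ 2) := by
      rw [integral_finset_sum]
      · refine Finset.sum_congr rfl fun y _ => ?_
        exact (integral_sub (intE _) (intE _)).symm
      · intro y _
        exact (intE _).sub (intE _)
    have e2 : quantE Y + 2 * δ ^ 2 =
        ∫ x in Qcube, ((Metric.infDist x (↑Y : Set E3)) ^ 2 + 2 * δ ^ 2) := by
      rw [integral_add (intE _) (intQ continuous_const), setIntegral_const]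
      simp [Measure.real, volume_Qcube, quantE]
    rw [e1, e2]
    refine setIntegral_mono_on (intQ ?_) (intQ ?_) measurable_Qcube fun x _ => hpt x
    · exact continuous_finset_sum _ fun y _ => (cont_sq _).sub (cont_sq _)
    · exact (cont_sq _).add continuous_const
  have hE := E_le n k hk (by omega) Y hY
  by_contra hcon
  push Not at hcon
  have hlt : ∀ y ∈ S, 9 * (1 / (k : ℝ)) ^ 2 / (k : ℝ) ^ 3 < quantE (Y.erase y) - quantE Y := by
    intro y hy
    rw [div_lt_iff₀ (by positivity), mul_comm (quantE _ - _)]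
    exact hcon y (hSY hy)
  have h1 := Finset.sum_lt_sum_of_nonempty hSne hlt
  rw [Finset.sum_const, nsmul_eq_mul] at h1
  have h2 : (k : ℝ) ^ 3 ≤ (S.card : ℝ) := by exact_mod_cast hSc
  have h3 : 9 * (1 / (k : ℝ)) ^ 2 ≤ (S.card : ℝ) * (9 * (1 / (k : ℝ)) ^ 2 / (k : ℝ) ^ 3) := by
    rw [← mul_div_assoc, le_div_iff₀ (by positivity), mul_comm]
    gcongr
  linarith

lemma gain (Y : Finset E3) (hne : Y.Nonempty) (x : E3) (hx : x ∈ Qcube) (r : ℝ) (hr : 0 ≤ r)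
    (hr2 : r ≤ 2) (hd : r ≤ Metric.infDist x (↑Y : Set E3)) (W : Finset E3) (hW : W ⊆ Y)
    (hWne : W.Nonempty) [DecidableEq E3] :
    r ^ 5 / 1024 ≤ quantE W - quantE (insert x W) := by
  set a : Fin 3 → ℝ := fun i => if x i ≤ 1 / 2 then x i else x i - r / 8 with ha
  set b : Fin 3 → ℝ := fun i => a i + r / 8 with hb
  have hBQ : boxS a b ⊆ Qcube := by
    intro z hz i
    have h1 := hz i
    have h2 := hx i
    simp only [hb, ha, Set.mem_Icc] at h1 h2 ⊢
    split_ifs at h1 <;> constructor <;> linarith [h1.1, h1.2, h2.1, h2.2]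
  have hdist : ∀ z ∈ boxS a b, dist z x ≤ r / 4 := by
    intro z hz
    have : dist z x ^ 2 ≤ 3 * (r / 8) ^ 2 := by
      refine dist_sq_le _ _ _ fun i => ?_
      have h1 := hz i
      simp only [hb, ha, Set.mem_Icc] at h1
      rw [abs_le]
      split_ifs at h1 <;> constructor <;> linarith [h1.1, h1.2]
    refine abs_le_of_sq_le_sq' ?_ (by positivity) |>.2
    nlinarith [sq_nonneg r]
  have hmono : ∀ z, Metric.infDist z (↑(insert x W) : Set E3) ≤ Metric.infDist z (↑W : Set E3) :=
    fun z => Metric.infDist_le_infDist_of_subset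
      (by exact_mod_cast Finset.subset_insert x W) (by exact_mod_cast hWne)
  have hvol : (volume : Measure E3).real (boxS a b) = (r / 8) ^ 3 := by
    rw [Measure.real, volume_boxS]
    simp [hb, ENNReal.toReal_ofReal (by positivity : 0 ≤ r / 8)]
  have e1 : quantE W - quantE (insert x W) = ∫ z in Qcube,
      ((Metric.infDist z (↑W : Set E3)) ^ 2 -
        (Metric.infDist z (↑(insert x W) : Set E3)) ^ 2) :=
    (integral_sub (intE _) (intE _)).symm
  have hint : IntegrableOn (fun z => (Metric.infDist z (↑W : Set E3)) ^ 2 -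
        (Metric.infDist z (↑(insert x W) : Set E3)) ^ 2) Qcube :=
    intQ ((cont_sq _).sub (cont_sq _))
  have h1 : ∫ z in boxS a b, ((Metric.infDist z (↑W : Set E3)) ^ 2 -
        (Metric.infDist z (↑(insert x W) : Set E3)) ^ 2) ≤ ∫ z in Qcube,
      ((Metric.infDist z (↑W : Set E3)) ^ 2 -
        (Metric.infDist z (↑(insert x W) : Set E3)) ^ 2) := by
    refine setIntegral_mono_set hint ?_ hBQ.eventuallyLE
    refine Filter.Eventually.of_forall fun z => ?_
    have := pow_le_pow_left₀ Metric.infDist_nonneg (hmono z) 2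
    simp only [Pi.zero_apply]
    linarith
  have h2 : ∫ z in boxS a b, r ^ 2 / 2 ≤ ∫ z in boxS a b, ((Metric.infDist z (↑W : Set E3)) ^ 2 -
        (Metric.infDist z (↑(insert x W) : Set E3)) ^ 2) := by
    refine setIntegral_mono_on ((intQ continuous_const).mono_set hBQ) (hint.mono_set hBQ)
      (measurable_boxS _ _) fun z hz => ?_
    have g1 := hdist z hz
    have g2 : Metric.infDist z (↑(insert x W) : Set E3) ≤ r / 4 :=
      (Metric.infDist_le_dist_of_mem (by simp)).trans g1
    have g3 : Metric.infDist z (↑Y : Set E3) ≤ Metric.infDist z (↑W : Set E3) :=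
      Metric.infDist_le_infDist_of_subset (by exact_mod_cast hW) (by exact_mod_cast hWne)
    have g4 := Metric.infDist_le_infDist_add_dist (s := (↑Y : Set E3)) (x := x) (y := z)
    rw [dist_comm] at g4
    have g5 : 3 * r / 4 ≤ Metric.infDist z (↑W : Set E3) := by linarith
    have g6 := pow_le_pow_left₀ (by positivity) g5 2
    have g7 := pow_le_pow_left₀ Metric.infDist_nonneg g2 2
    nlinarith
  rw [setIntegral_const, hvol, smul_eq_mul] at h2
  rw [e1]
  refine le_trans (le_of_eq ?_) (h2.trans h1)
  ring

lemma radius (n k : ℕ) (hk : 0 < k) (hkn : 2 * k ^ 3 ≤ n) (Y : Finset E3)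
    (hY : IsMinimizer n Y) (y : E3) (hyY : y ∈ Y) (x : E3) (hx : x ∈ vorCell Y y) :
    dist x y ≤ 7 / k := by
  classical
  have hk3 : 0 < k ^ 3 := by positivity
  have hk' : (0 : ℝ) < k := by exact_mod_cast hk
  set r := dist x y with hr
  rcases (dist_nonneg : 0 ≤ dist x y).eq_or_lt with h0 | h0
  · rw [hr, ← h0]; positivity
  have hne : Y.Nonempty := ⟨y, hyY⟩
  have hd : r ≤ Metric.infDist x (↑Y : Set E3) :=
    (Metric.le_infDist (by exact_mod_cast hne)).2 fun {z} hz => hx.2 z hz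
  have hr2 : r ≤ 2 := by
    have : dist x y ^ 2 ≤ 3 * 1 ^ 2 := by
      refine dist_sq_le _ _ _ fun i => ?_
      have h1 := hx.1 i
      have h2 := hY.1 hyY i
      rw [abs_le]
      constructor <;> linarith [h1.1, h1.2, h2.1, h2.2]
    nlinarith
  obtain ⟨w, hw, hcost⟩ := removal n k hk hkn Y hY
  have hxY : x ∉ Y := by
    intro h
    have := hx.2 x h
    rw [dist_self] at this
    linarith
  have hWc : (Y.erase w).card = n - 1 := by rw [Finset.card_erase_of_mem hw, hY.2.1]
  have hWne : (Y.erase w).Nonempty := by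
    rw [← Finset.card_pos, hWc]; omega
  have hg := gain Y hne x hx.1 r h0.le hr2 hd (Y.erase w) (Finset.erase_subset _ _) hWne
  have hmin := hY.2.2 (insert x (Y.erase w)) (by
      intro z hz
      rcases Finset.mem_insert.1 (Finset.mem_coe.1 hz) with rfl | h
      · exact hx.1
      · exact hY.1 (Finset.mem_of_mem_erase h)) (by
      rw [Finset.card_insert_of_notMem (fun h => hxY (Finset.mem_of_mem_erase h)), hWc]
      omega)
  have h1 : r ^ 5 / 1024 ≤ quantE (Y.erase w) - quantE Y := by linarith
  have h2 : (k : ℝ) ^ 3 * (r ^ 5 / 1024) ≤ 9 * (1 / (k : ℝ)) ^ 2 :=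
    le_trans (by gcongr) hcost
  have h3 : (r * k) ^ 5 ≤ 7 ^ 5 := by
    have : (k : ℝ) ^ 2 * ((k : ℝ) ^ 3 * (r ^ 5 / 1024)) ≤ k ^ 2 * (9 * (1 / (k : ℝ)) ^ 2) := by
      gcongr
    have e : (k : ℝ) ^ 2 * (9 * (1 / (k : ℝ)) ^ 2) = 9 := by field_simp
    rw [e] at this
    have e2 : (r * k) ^ 5 = 1024 * ((k : ℝ) ^ 2 * ((k : ℝ) ^ 3 * (r ^ 5 / 1024))) := by ring
    rw [e2]
    norm_num
    linarith
  rw [le_div_iff₀ hk']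
  exact le_of_pow_le_pow_left₀ (by norm_num) (by norm_num) h3

lemma Gamma4_ge : 15 * (16 : ℝ) ^ ((1 : ℝ) / 3) ≤ Gamma4 := by
  have e16 : (16 : ℝ) ^ ((1 : ℝ) / 4) = 2 := by
    rw [show (16 : ℝ) = 2 ^ (4 : ℝ) by norm_num, ← Real.rpow_mul (by norm_num)]; norm_num
  have hpi := Real.pi_lt_four
  have hpi0 := Real.pi_pos
  have ho0 : 0 < omega3 := by unfold omega3; positivity
  have a1 : (1 : ℝ) ≤ (12 : ℝ) ^ ((1 : ℝ) / 4) := Real.one_le_rpow (by norm_num) (by norm_num)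
  have a2 : Real.pi ^ ((1 : ℝ) / 4) ≤ 2 := by
    rw [← e16]; exact Real.rpow_le_rpow hpi0.le (by linarith) (by norm_num)
  have a3 : omega3 ^ ((1 : ℝ) / 12) ≤ 2 := by
    rw [← e16]
    refine (Real.rpow_le_rpow ho0.le (by unfold omega3; linarith : omega3 ≤ 16) (by norm_num)).trans ?_
    exact Real.rpow_le_rpow_of_exponent_le (by norm_num) (by norm_num)
  have hs1 : 1 < Real.sqrt (1 + (2 ^ 4 * 3 ^ 3 : ℝ) / (5 ^ 2 * 10 ^ 3)) :=
    Real.lt_sqrt_of_sq_lt (by norm_num)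
  have hs2 : Real.sqrt (1 + (2 ^ 4 * 3 ^ 3 : ℝ) / (5 ^ 2 * 10 ^ 3)) ≤ 1.01 :=
    Real.sqrt_le_iff.2 ⟨by norm_num, by norm_num⟩
  have a4 : 10 ≤ (Real.sqrt (1 + (2 ^ 4 * 3 ^ 3 : ℝ) / (5 ^ 2 * 10 ^ 3)) - 1) ^ (-(1 : ℝ) / 2) := by
    have e : (0.01 : ℝ) ^ (-(1 : ℝ) / 2) = 10 := by
      rw [show (0.01 : ℝ) = 10 ^ (-2 : ℝ) by rw [Real.rpow_neg (by norm_num)]; norm_num,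
        ← Real.rpow_mul (by norm_num)]
      norm_num
    rw [← e]
    exact Real.rpow_le_rpow_of_nonpos (by linarith) (by linarith) (by norm_num)
  have a5 : 3 ≤ ((5 ^ 2 * 10 ^ 3 : ℝ) / (2 ^ 2 * 3 ^ 3)) ^ ((1 : ℝ) / 4) := by
    have e : (81 : ℝ) ^ ((1 : ℝ) / 4) = 3 := by
      rw [show (81 : ℝ) = 3 ^ (4 : ℝ) by norm_num, ← Real.rpow_mul (by norm_num)]; norm_num
    rw [← e]
    exact Real.rpow_le_rpow (by norm_num) (by norm_num) (by norm_num)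
  have a6 : (0 : ℝ) < (16 : ℝ) ^ ((1 : ℝ) / 3) := by positivity
  have b1 : (16 : ℝ) ^ ((1 : ℝ) / 3) / 2 ≤ 2 * (12 : ℝ) ^ ((1 : ℝ) / 4) * (16 : ℝ) ^ ((1 : ℝ) / 3) /
      (Real.pi ^ ((1 : ℝ) / 4) * omega3 ^ ((1 : ℝ) / 12)) := by
    rw [le_div_iff₀ (by positivity)]
    have c1 : Real.pi ^ ((1 : ℝ) / 4) * omega3 ^ ((1 : ℝ) / 12) ≤ 2 * 2 := by gcongr
    calc (16 : ℝ) ^ ((1 : ℝ) / 3) / 2 * (Real.pi ^ ((1 : ℝ) / 4) * omega3 ^ ((1 : ℝ) / 12))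
        ≤ (16 : ℝ) ^ ((1 : ℝ) / 3) / 2 * (2 * 2) := by gcongr
      _ = 2 * 1 * (16 : ℝ) ^ ((1 : ℝ) / 3) := by ring
      _ ≤ _ := by gcongr
  unfold Gamma4
  calc 15 * (16 : ℝ) ^ ((1 : ℝ) / 3) = (16 : ℝ) ^ ((1 : ℝ) / 3) / 2 * 10 * 3 := by ring
    _ ≤ _ := by gcongr

lemma exists_k (n : ℕ) (hn : 3 ≤ n) : ∃ k : ℕ, 0 < k ∧ 2 * k ^ 3 ≤ n ∧ n ≤ 16 * k ^ 3 := by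
  classical
  have hP : 2 * 1 ^ 3 ≤ n := by omega
  set k := Nat.findGreatest (fun k => 2 * k ^ 3 ≤ n) n with hk
  have h1 : 2 * k ^ 3 ≤ n :=
    Nat.findGreatest_spec (P := fun k => 2 * k ^ 3 ≤ n) (by omega : 1 ≤ n) hP
  have h2 : 1 ≤ k := Nat.le_findGreatest (by omega) hP
  refine ⟨k, h2, h1, ?_⟩
  by_contra hcon
  push Not at hcon
  have h3 : 2 * (k + 1) ^ 3 ≤ n := by
    have : (k + 1) ^ 3 ≤ (2 * k) ^ 3 := Nat.pow_le_pow_left (by omega) 3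
    have e : (2 * k) ^ 3 = 8 * k ^ 3 := by ring
    omega
  have h4 : k + 1 ≤ n := by
    have : k + 1 ≤ (k + 1) ^ 3 := Nat.le_self_pow (by norm_num) _
    omega
  have := Nat.le_findGreatest (P := fun k => 2 * k ^ 3 ≤ n) h4 h3
  omega

theorem stmt_5 (n : ℕ) (hn : 3 ≤ n) (Y : Finset E3) (hY : IsMinimizer n Y)
    (y : E3) (hyY : y ∈ Y) :
    Metric.diam (vorCell Y y) ≤ Gamma4 * ((n : ℝ) - 2) ^ (-(1 : ℝ) / 3) := by
  obtain ⟨k, hk, hk1, hk2⟩ := exists_k n hn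
  have hk' : (0 : ℝ) < k := by exact_mod_cast hk
  have hn' : (3 : ℝ) ≤ n := by exact_mod_cast hn
  have h1 : Metric.diam (vorCell Y y) ≤ 14 / k := by
    refine Metric.diam_le_of_forall_dist_le (by positivity) fun a ha b hb => ?_
    have g1 := radius n k hk hk1 Y hY y hyY a ha
    have g2 := radius n k hk hk1 Y hY y hyY b hb
    have g3 := dist_triangle_right a b y
    have e : (14 : ℝ) / k = 7 / k + 7 / k := by ring
    linarith
  have hm : (0 : ℝ) < (n : ℝ) - 2 := by linarith
  have h2 : ((n : ℝ) - 2) ^ ((1 : ℝ) / 3) ≤ (16 : ℝ) ^ ((1 : ℝ) / 3) * k := by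
    have e : (k : ℝ) = ((k : ℝ) ^ 3) ^ ((1 : ℝ) / 3) := by
      rw [← Real.rpow_natCast, ← Real.rpow_mul hk'.le]; norm_num
    have hk2' : (n : ℝ) ≤ 16 * (k : ℝ) ^ 3 := by exact_mod_cast hk2
    calc ((n : ℝ) - 2) ^ ((1 : ℝ) / 3) ≤ (16 * (k : ℝ) ^ 3) ^ ((1 : ℝ) / 3) :=
          Real.rpow_le_rpow hm.le (by linarith) (by norm_num)
      _ = (16 : ℝ) ^ ((1 : ℝ) / 3) * k := by
          rw [Real.mul_rpow (by norm_num) (by positivity), ← e]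
  have hp : 0 < ((n : ℝ) - 2) ^ ((1 : ℝ) / 3) := Real.rpow_pos_of_pos hm _
  have h16 : 0 < (16 : ℝ) ^ ((1 : ℝ) / 3) := by positivity
  rw [neg_div, Real.rpow_neg hm.le, ← div_eq_mul_inv, le_div_iff₀ hp]
  calc Metric.diam (vorCell Y y) * ((n : ℝ) - 2) ^ ((1 : ℝ) / 3)
      ≤ 14 / k * ((16 : ℝ) ^ ((1 : ℝ) / 3) * k) := by gcongr
    _ = 14 * (16 : ℝ) ^ ((1 : ℝ) / 3) := by field_simp
    _ ≤ 15 * (16 : ℝ) ^ ((1 : ℝ) / 3) := by linarith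
    _ ≤ Gamma4 := Gamma4_ge
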